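/- arXiv:2603.24884 — 2 statements merged into one kernel-verified Lean document; each statement's English description precedes it below -/
import Mathlib

section
/- For every integer n ≥ 2, each power z^d for 0 ≤ d ≤ n lies in the invariant subalgebra VG_n^{S_n}, and the family (1, z, z^2, …, z^n) is a basis of VG_n^{S_n} as a ℚ-vector space. -/
noncomputable section

/-- Index set for the variables `x_{ij}` with `i ≠ j` in `{1, …, n+1}` (as `Fin (n+1)`). -/
abbrev VGidx (n : ℕ) := {p : Fin (n+1) × Fin (n+1) // p.1 ≠ p.2}

/-- The defining ideal of the Varchenko–Gel'fand ring of the braid arrangement `A_n`. -/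
def VGrel (n : ℕ) : Ideal (MvPolynomial (VGidx n) ℚ) :=
  Ideal.span
    ({q | ∃ v : VGidx n, q = MvPolynomial.X v ^ 2} ∪
     {q | ∃ (i j : Fin (n+1)) (hij : i ≠ j),
        q = MvPolynomial.X (⟨(i,j),hij⟩ : VGidx n) + MvPolynomial.X ⟨(j,i),hij.symm⟩} ∪
     {q | ∃ (i j k : Fin (n+1)) (hij : i ≠ j) (hjk : j ≠ k) (hki : k ≠ i),
        q = MvPolynomial.X (⟨(i,j),hij⟩ : VGidx n) * MvPolynomial.X ⟨(j,k),hjk⟩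
          + MvPolynomial.X (⟨(j,k),hjk⟩ : VGidx n) * MvPolynomial.X ⟨(k,i),hki⟩
          + MvPolynomial.X (⟨(k,i),hki⟩ : VGidx n) * MvPolynomial.X ⟨(i,j),hij⟩})

/-- The Varchenko–Gel'fand ring `VG_n`. -/
abbrev VG (n : ℕ) := MvPolynomial (VGidx n) ℚ ⧸ VGrel n

/-- The action of a permutation of `{1, …, n+1}` on the variable indices. -/
def VGpermIdx (n : ℕ) (σ : Equiv.Perm (Fin (n+1))) : VGidx n → VGidx n :=
  fun v => ⟨(σ v.1.1, σ v.1.2), fun h => v.2 (σ.injective h)⟩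

lemma VGrel_stable (n : ℕ) (σ : Equiv.Perm (Fin (n+1))) :
    ∀ a ∈ VGrel n, (MvPolynomial.rename (VGpermIdx n σ)) a ∈ VGrel n := by
  intro a ha
  have hle : (VGrel n).map (MvPolynomial.rename (VGpermIdx n σ)).toRingHom ≤ VGrel n := by
    rw [VGrel, Ideal.map_span, Ideal.span_le]
    rintro q ⟨p, hp, rfl⟩
    apply Ideal.subset_span
    simp only [Set.mem_union, Set.mem_setOf_eq] at hp ⊢
    rcases hp with ((⟨v, rfl⟩ | ⟨i, j, hij, rfl⟩) | ⟨i, j, k, hij, hjk, hki, rfl⟩)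
    · refine Or.inl (Or.inl ⟨VGpermIdx n σ v, ?_⟩)
      simp [map_pow, MvPolynomial.rename_X]
    · refine Or.inl (Or.inr ⟨σ i, σ j, fun h => hij (σ.injective h), ?_⟩)
      simp [map_add, MvPolynomial.rename_X, VGpermIdx]
    · refine Or.inr ⟨σ i, σ j, σ k, fun h => hij (σ.injective h), fun h => hjk (σ.injective h),
        fun h => hki (σ.injective h), ?_⟩
      simp [map_add, map_mul, MvPolynomial.rename_X, VGpermIdx]
  exact hle (Ideal.mem_map_of_mem _ ha)

/-- The algebra automorphism of `VG_n` induced by a permutation of `{1, …, n+1}`. -/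
def VGperm (n : ℕ) (σ : Equiv.Perm (Fin (n+1))) : VG n →ₐ[ℚ] VG n :=
  Ideal.Quotient.liftₐ (VGrel n)
    ((Ideal.Quotient.mkₐ ℚ (VGrel n)).comp (MvPolynomial.rename (VGpermIdx n σ)))
    (fun a ha => by
      simp only [AlgHom.comp_apply, Ideal.Quotient.mkₐ_eq_mk]
      exact Ideal.Quotient.eq_zero_iff_mem.mpr (VGrel_stable n σ a ha))

/-- The subalgebra of `S_n`-invariants of `VG_n`, where `S_n` is the subgroup of permutations
of `{1, …, n+1}` fixing `n+1`. -/
def VGinv (n : ℕ) : Subalgebra ℚ (VG n) where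
  carrier := {x | ∀ σ : Equiv.Perm (Fin (n+1)), σ (Fin.last n) = Fin.last n → VGperm n σ x = x}
  mul_mem' := fun hx hy σ hσ => by rw [map_mul, hx σ hσ, hy σ hσ]
  add_mem' := fun hx hy σ hσ => by rw [map_add, hx σ hσ, hy σ hσ]
  one_mem' := fun σ _ => map_one _
  zero_mem' := fun σ _ => map_zero _
  algebraMap_mem' := fun r σ hσ => AlgHom.commutes _ r

/-- The subalgebra of `S_{n+1}`-invariants of `VG_n`. -/
def VGinvFull (n : ℕ) : Subalgebra ℚ (VG n) where
  carrier := {x | ∀ σ : Equiv.Perm (Fin (n+1)), VGperm n σ x = x}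
  mul_mem' := fun hx hy σ => by rw [map_mul, hx σ, hy σ]
  add_mem' := fun hx hy σ => by rw [map_add, hx σ, hy σ]
  one_mem' := fun σ => map_one _
  zero_mem' := fun σ => map_zero _
  algebraMap_mem' := fun r σ => AlgHom.commutes _ r

/-- The element `z = x_{1,n+1} + x_{2,n+1} + ⋯ + x_{n,n+1}` of `VG_n`. -/
def zVG (n : ℕ) : VG n :=
  Ideal.Quotient.mk (VGrel n)
    (∑ i : Fin n, MvPolynomial.X ⟨(i.castSucc, Fin.last n), (Fin.castSucc_lt_last i).ne⟩)

/-!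
For finite `T`, write `S_T` for the permutations supported on `T`. Let `f` be an `S_T`-invariant
linear map and `r ∉ T`. If `f` kills every star `∏_{j ∈ S} x_{jr}` with `S ⊆ T`, then `f` kills the
whole subalgebra generated by the `x_{ij}` with `i, j ∈ T ∪ {r}`. Indeed, modulo the triangle
relation this subalgebra is spanned by `1` and the `x_{ir}`, `i ∈ T`, over the subalgebra of `T`, so
by induction it suffices to test `f` and `f (x_{ir} · _)` on the stars centred at `i`. These values
are controlled by the triangle relation in the form of the partial fraction identity
`∏_{j ∈ S} x_{ja} = ∑_{i ∈ S} x_{ia} ∏_{j ∈ S \ i} x_{ji}`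
(think of `x_{ij} = 1 / (t_i - t_j)`): by invariance all summands on the right have the same image.

If `f` is `S_n`-invariant and kills the powers of `z`, then it kills the stars centred at `n + 1`:
multiplying the star with leaves `S` by `z` gives the sum of the stars with leaves `S ∪ {j}`,
`j ∉ S`, which have the same image, also after multiplication by a power of `z`. Applied to the
average over `S_n` modulo the span of the powers of `z`, this shows that the powers of `z` span the
invariants. For independence, `z ^ (n + 1) = 0` since `z` is a sum of `n` elements of square zero,
and `z ^ n ≠ 0` since `x_{ij} ↦ e_{min(i,j)}`, up to sign, defines a ring homomorphism whenever the
`e_i` have square zero.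
-/

open Finset Equiv

universe u

theorem sum_pow_card_succ_eq_zero {ι A : Type*} [CommRing A] {e : ι → A}
    (he : ∀ i, e i * e i = 0) (s : Finset ι) : (∑ i ∈ s, e i) ^ (#s + 1) = 0 := by
  induction s using Finset.cons_induction with
  | empty => simp
  | cons a s ha ih =>
    rw [sum_cons, card_cons]
    exact (Commute.all _ _).add_pow_eq_zero_of_add_le_succ_of_pow_eq_zero
      ((pow_two _).trans (he a)) ih (by omega)

theorem exists_sq_eq_zero_sum_pow_ne_zero (k : Type u) [Field k] [CharZero k] (n : ℕ) :
    ∃ (A : Type u) (_ : CommRing A) (_ : Algebra k A) (e : Fin n → A),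
      (∀ i, e i * e i = 0) ∧ (∑ i, e i) ^ n ≠ 0 := by
  induction n with
  | zero => exact ⟨k, inferInstance, inferInstance, Fin.elim0, fun i => i.elim0, by simp⟩
  | succ n ih =>
    obtain ⟨A, _, _, e, he, hsum⟩ := ih
    refine ⟨DualNumber A, inferInstance, inferInstance,
      Fin.cons DualNumber.eps fun i => TrivSqZeroExt.inl (e i), ?_, fun h => ?_⟩
    · exact Fin.cases (by simp) fun i => by simp [← TrivSqZeroExt.inl_mul, he i]
    · have hsnd := congrArg TrivSqZeroExt.snd h
      simp only [Fin.sum_univ_succ, Fin.cons_zero, Fin.cons_succ, TrivSqZeroExt.snd_pow] at hsnd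
      have hsmul : ((n + 1 : ℕ) : k) • (∑ i, e i) ^ n = 0 := by
        rw [Nat.cast_smul_eq_nsmul]
        simpa [← TrivSqZeroExt.inl_sum] using hsnd
      exact (smul_eq_zero.1 hsmul).elim (Nat.cast_ne_zero.2 n.succ_ne_zero) hsum

theorem linearIndependent_pow_of_pow_succ_eq_zero {k A : Type*} [Field k] [Ring A] [Algebra k A]
    {a : A} {n : ℕ} (hzero : a ^ (n + 1) = 0) (hne : a ^ n ≠ 0) :
    LinearIndependent k fun d : Fin (n + 1) => a ^ (d : ℕ) := by
  rw [Fintype.linearIndependent_iff]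
  intro g hg i
  induction i using WellFoundedLT.induction with
  | ind i ih =>
    have hmul : ∑ j, g j • a ^ (n - i + j) = 0 := by
      simpa only [mul_sum, mul_smul_comm, ← pow_add, mul_zero] using
        congrArg (a ^ (n - (i : ℕ)) * ·) hg
    rw [sum_eq_single i, Nat.sub_add_cancel (Nat.le_of_lt_succ i.2)] at hmul
    · exact (smul_eq_zero.1 hmul).resolve_right hne
    · intro j _ hj
      rcases lt_or_gt_of_ne hj with hlt | hgt
      · rw [ih j hlt, zero_smul]
      · rw [pow_eq_zero_of_le (by omega) hzero, smul_zero]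
    · simp

section Arnold

variable {ι A : Type*} [CommRing A]

/-- Families satisfying the relations of the generators `x_{ij}` of the Varchenko–Gel'fand ring.
The indices are not required to be distinct: with the convention `x_{ii} = 0` the triangle relation
for `i, i, j` is the relation `x_{ij}² = 0`. -/
structure IsArnoldFamily (x : ι → ι → A) : Prop where
  self (i : ι) : x i i = 0
  antisymm (i j : ι) : x j i = -x i j
  triangle (i j k : ι) : x i j * x j k + x j k * x k i + x k i * x i j = 0

/-- The star monomial `∏_{j ∈ S} x_{ji}` with centre `i` and leaves `S`. -/
def starProd (x : ι → ι → A) (i : ι) (S : Finset ι) : A := ∏ j ∈ S, x j i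

/-- The subalgebra generated by the `x_{ij}` with both indices in `T`. -/
def subalgebraOn (k : Type*) [CommRing k] [Algebra k A] (x : ι → ι → A) (T : Finset ι) :
    Subalgebra k A :=
  Algebra.adjoin k (Set.image2 x T T)

namespace IsArnoldFamily

variable {x : ι → ι → A}

theorem mul_self (hx : IsArnoldFamily x) (i j : ι) : x i j * x i j = 0 := by
  have h := hx.triangle i i j
  rw [hx.self, hx.antisymm i j] at h
  linear_combination -h

theorem mul_eq_add (hx : IsArnoldFamily x) (i j a : ι) :
    x i a * x j a = x i a * x j i + x j a * x i j := by
  have h := hx.triangle i j a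
  rw [hx.antisymm i a] at h
  rw [hx.antisymm i j]
  linear_combination -h

theorem of_mul_self_eq_zero [LinearOrder ι] {e : ι → A} (he : ∀ i, e i * e i = 0) :
    IsArnoldFamily fun i j => if i < j then e i else if j < i then -e j else 0 where
  self i := by simp
  antisymm i j := by grind
  triangle i j k := by
    have := he i
    have := he j
    have := he k
    grind

theorem starProd_eq_sum_erase [DecidableEq ι] (hx : IsArnoldFamily x) {S : Finset ι}
    (hS : S.Nonempty) (a : ι) :
    starProd x a S = ∑ i ∈ S, x i a * starProd x i (S.erase i) := by
  induction hS using Finset.Nonempty.cons_induction generalizing a with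
  | singleton b => simp [starProd]
  | cons b S hb _ ih =>
    have hterm : ∀ i ∈ S, x i a * starProd x i ((cons b S hb).erase i) =
        x i a * x b i * starProd x i (S.erase i) := fun i hi => by
      have hbi : b ≠ i := fun h => hb (h ▸ hi)
      rw [erase_cons_of_ne hb hbi, starProd, prod_cons, ← starProd, mul_assoc]
    rw [sum_cons, erase_cons, sum_congr rfl hterm, ih b, starProd, prod_cons, ← starProd, ih a,
      mul_sum, mul_sum, ← sum_add_distrib]
    refine sum_congr rfl fun i _ => ?_
    linear_combination starProd x i (S.erase i) * hx.mul_eq_add b i a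

theorem sum_starProd_erase_eq_zero [DecidableEq ι] (hx : IsArnoldFamily x) {S : Finset ι}
    (hS : S.Nonempty) {a : ι} (ha : a ∉ S) :
    ∑ i ∈ insert a S, starProd x i ((insert a S).erase i) = 0 := by
  have hterm : ∀ i ∈ S, starProd x i ((insert a S).erase i) =
      -(x i a * starProd x i (S.erase i)) := fun i hi => by
    have hai : a ≠ i := fun h => ha (h ▸ hi)
    rw [erase_insert_of_ne hai, starProd, prod_insert (by simp [ha]), ← starProd, hx.antisymm i a,
      neg_mul]
  rw [sum_insert ha, erase_insert ha, sum_congr rfl hterm, sum_neg_distrib,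
    ← hx.starProd_eq_sum_erase hS a, add_neg_cancel]

theorem mem_span_of_mem_subalgebraOn_insert [DecidableEq ι] {k : Type*} [CommRing k]
    [Algebra k A] (hx : IsArnoldFamily x) {T : Finset ι} {r : ι} {y : A}
    (hy : y ∈ subalgebraOn k x (insert r T)) :
    y ∈ Submodule.span (subalgebraOn k x T) (insert 1 ((x · r) '' T)) := by
  set B := subalgebraOn k x T
  set M := Submodule.span B (insert 1 ((x · r) '' (T : Set ι)))
  have one_mem : (1 : A) ∈ M := Submodule.subset_span (Set.mem_insert _ _)
  have mem_r : ∀ i ∈ T, x i r ∈ M := fun i hi =>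
    Submodule.subset_span (Set.mem_insert_of_mem _ ⟨i, hi, rfl⟩)
  have mem_B : ∀ i ∈ T, ∀ j ∈ T, x i j ∈ B := fun i hi j hj =>
    Algebra.subset_adjoin ⟨i, hi, j, hj, rfl⟩
  have smul_mem : ∀ b ∈ B, ∀ m ∈ M, m * b ∈ M := fun b hb m hm => by
    rw [mul_comm]
    exact M.smul_mem (⟨b, hb⟩ : B) hm
  have mul_mem : ∀ y z, y ∈ M → z ∈ M → y * z ∈ M := fun y z hy hz => by
    refine (?_ : M * M ≤ M) (Submodule.mul_mem_mul hy hz)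
    rw [Submodule.span_mul_span, Submodule.span_le]
    rintro _ ⟨_, rfl | ⟨i, hi, rfl⟩, _, rfl | ⟨j, hj, rfl⟩, rfl⟩ <;>
      simp only [one_mul, mul_one]
    · exact one_mem
    · exact mem_r j hj
    · exact mem_r i hi
    · rw [hx.mul_eq_add i j r]
      exact add_mem (smul_mem _ (mem_B j hj i hi) _ (mem_r i hi))
        (smul_mem _ (mem_B i hi j hj) _ (mem_r j hj))
  have gens : Set.image2 x (insert r T : Finset ι) (insert r T : Finset ι) ⊆ M := by
    simp only [coe_insert]
    rintro _ ⟨i, rfl | hi, j, rfl | hj, rfl⟩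
    · rw [hx.self]; exact M.zero_mem
    · rw [hx.antisymm j i]; exact M.neg_mem (mem_r j hj)
    · exact mem_r i hi
    · simpa using smul_mem _ (mem_B i hi j hj) 1 one_mem
  exact Algebra.adjoin_le (S := (M.toSubalgebra one_mem mul_mem).restrictScalars k) gens hy

end IsArnoldFamily

theorem map_swap_eq_self [DecidableEq ι] {S : Finset ι} {i j : ι} (h : i ∈ S ↔ j ∈ S) :
    S.map (swap i j).toEmbedding = S :=
  coe_injective <| by simpa using (swap_bijOn_self (s := (S : Set ι)) h).image_eq

section Invariance

variable {k V : Type*} [CommRing k] [Algebra k A] [AddCommGroup V] [Module k V]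

theorem map_starProd {ρ : Perm ι → A →ₐ[k] A} {x : ι → ι → A}
    (hρ : ∀ σ i j, ρ σ (x i j) = x (σ i) (σ j)) (σ : Perm ι) (i : ι) (S : Finset ι) :
    ρ σ (starProd x i S) = starProd x (σ i) (S.map σ.toEmbedding) := by
  simp [starProd, hρ]

theorem map_swap_starProd_erase [DecidableEq ι] {ρ : Perm ι → A →ₐ[k] A} {x : ι → ι → A}
    (hρ : ∀ σ i j, ρ σ (x i j) = x (σ i) (σ j)) {S : Finset ι} {i j : ι} (hi : i ∈ S)
    (hj : j ∈ S) :
    ρ (swap i j) (starProd x i (S.erase i)) = starProd x j (S.erase j) := by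
  rw [map_starProd hρ, map_erase, map_swap_eq_self (iff_of_true hi hj), coe_toEmbedding,
    swap_apply_left]

theorem eq_zero_of_mem_span_subalgebra {B : Subalgebra k A} {s : Set A} {f : A →ₗ[k] V}
    (hf : ∀ b ∈ B, ∀ a ∈ s, f (b * a) = 0) {y : A} (hy : y ∈ Submodule.span B s) : f y = 0 := by
  suffices ∀ b ∈ B, f (b * y) = 0 by simpa using this 1 (one_mem B)
  induction hy using Submodule.span_induction with
  | mem a ha => exact fun b hb => hf b hb a ha
  | zero => simp
  | add y z _ _ hy hz => exact fun b hb => by rw [mul_add, map_add, hy b hb, hz b hb, add_zero]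
  | smul c y _ hy =>
    intro b hb
    rw [Subalgebra.smul_def, smul_eq_mul, ← mul_assoc]
    exact hy _ (mul_mem hb c.2)

/-- Invariance of the linear map `f` under the permutations supported on `T`, for an action `ρ` of
the symmetric group by algebra endomorphisms. -/
def IsInvariantOn (ρ : Perm ι → A →ₐ[k] A) (T : Finset ι) (f : A →ₗ[k] V) : Prop :=
  ∀ σ : Perm ι, (∀ i ∉ T, σ i = i) → ∀ y, f (ρ σ y) = f y

namespace IsInvariantOn

variable {ρ : Perm ι → A →ₐ[k] A} {x : ι → ι → A} {S T : Finset ι} {i j r : ι}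
  {f : A →ₗ[k] V}

theorem mono (hf : IsInvariantOn ρ T f) (hST : S ⊆ T) : IsInvariantOn ρ S f :=
  fun σ hσ => hf σ fun i hi => hσ i fun hiS => hi (hST hiS)

theorem comp_mulRight (hf : IsInvariantOn ρ T f) {a : A}
    (ha : ∀ σ : Perm ι, (∀ i ∉ T, σ i = i) → ρ σ a = a) :
    IsInvariantOn ρ T (f ∘ₗ LinearMap.mulRight k a) := fun σ hσ y => by
  simpa [ha σ hσ] using hf σ hσ (y * a)

theorem apply_swap [DecidableEq ι] (hf : IsInvariantOn ρ T f) (hi : i ∈ T) (hj : j ∈ T) (y : A) :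
    f (ρ (swap i j) y) = f y :=
  hf _ (fun _ hl => swap_apply_of_ne_of_ne (fun h => hl (h ▸ hi)) fun h => hl (h ▸ hj)) y

variable [IsAddTorsionFree V]

theorem apply_starProd_eq_zero [DecidableEq ι] (hf : IsInvariantOn ρ T f) (hx : IsArnoldFamily x)
    (hρ : ∀ σ i j, ρ σ (x i j) = x (σ i) (σ j)) (hS : S.Nonempty) (hi : i ∉ S)
    (hST : insert i S ⊆ T) : f (starProd x i S) = 0 := by
  set U := insert i S
  have hiU : i ∈ U := mem_insert_self i S
  have hsum : ∑ j ∈ U, f (starProd x j (U.erase j)) = 0 := by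
    rw [← map_sum, hx.sum_starProd_erase_eq_zero hS hi, map_zero]
  have hconst : ∀ j ∈ U, f (starProd x j (U.erase j)) = f (starProd x i S) := fun j hj => by
    rw [← map_swap_starProd_erase hρ hiU hj, hf.apply_swap (hST hiU) (hST hj), erase_insert hi]
  rw [sum_eq_card_nsmul hconst] at hsum
  exact (smul_eq_zero.1 hsum).resolve_left (card_ne_zero_of_mem hiU)

theorem apply_mul_starProd_erase_eq_zero [DecidableEq ι] (hf : IsInvariantOn ρ T f)
    (hx : IsArnoldFamily x) (hρ : ∀ σ i j, ρ σ (x i j) = x (σ i) (σ j)) (hST : S ⊆ T) (hr : r ∉ T)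
    (hstar : f (starProd x r S) = 0) (hi : i ∈ S) :
    f (x i r * starProd x i (S.erase i)) = 0 := by
  have hconst : ∀ j ∈ S, f (x j r * starProd x j (S.erase j)) =
      f (x i r * starProd x i (S.erase i)) := fun j hj => by
    have hfix : swap i j r = r :=
      swap_apply_of_ne_of_ne (fun h => hr (h ▸ hST hi)) fun h => hr (h ▸ hST hj)
    rw [← hf.apply_swap (hST hi) (hST hj) (x i r * _), map_mul (ρ _), hρ, swap_apply_left, hfix,
      map_swap_starProd_erase hρ hi hj]
  rw [hx.starProd_eq_sum_erase ⟨i, hi⟩, map_sum, sum_eq_card_nsmul hconst] at hstar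
  exact (smul_eq_zero.1 hstar).resolve_left (card_ne_zero_of_mem hi)

theorem apply_pow_mul_starProd_eq_zero (hf : IsInvariantOn ρ T f) (hx : IsArnoldFamily x)
    (hρ : ∀ σ i j, ρ σ (x i j) = x (σ i) (σ j)) (hr : r ∉ T)
    (hpow : ∀ d : ℕ, f ((∑ j ∈ T, x j r) ^ d) = 0) (hST : S ⊆ T) (d : ℕ) :
    f ((∑ j ∈ T, x j r) ^ d * starProd x r S) = 0 := by
  classical
  set z := ∑ j ∈ T, x j r with hz
  induction S using Finset.induction_on generalizing d with
  | empty => simpa [starProd] using hpow d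
  | insert i S hi ih =>
    obtain ⟨hiT, hST⟩ := insert_subset_iff.1 hST
    have hz_mul : z * starProd x r S = ∑ j ∈ T \ S, starProd x r (insert j S) := by
      rw [hz, sum_mul, ← sum_sdiff hST, sum_eq_zero (s := S), add_zero]
      · exact sum_congr rfl fun j hj => by
          rw [starProd, starProd, prod_insert (mem_sdiff.1 hj).2]
      · intro j hj
        rw [starProd, ← mul_prod_erase S _ hj, ← mul_assoc, hx.mul_self, zero_mul]
    have hconst : ∀ j ∈ T \ S, f (z ^ d * starProd x r (insert j S)) =
        f (z ^ d * starProd x r (insert i S)) := fun j hj => by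
      obtain ⟨hjT, hjS⟩ := mem_sdiff.1 hj
      have hfix_r : swap i j r = r :=
        swap_apply_of_ne_of_ne (fun h => hr (h ▸ hiT)) fun h => hr (h ▸ hjT)
      have hfix_z : ρ (swap i j) z = z := by
        conv_rhs => rw [hz, ← map_swap_eq_self (iff_of_true hiT hjT), sum_map]
        simp [hz, hρ, hfix_r]
      rw [← hf.apply_swap hiT hjT (z ^ d * starProd x r (insert i S)), map_mul (ρ _),
        map_pow (ρ _), hfix_z, map_starProd hρ, hfix_r, map_insert,
        map_swap_eq_self (iff_of_false hi hjS), coe_toEmbedding, swap_apply_left]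
    have hmul := ih hST (d + 1)
    rw [pow_succ, mul_assoc, hz_mul, mul_sum, map_sum, sum_eq_card_nsmul hconst] at hmul
    exact (smul_eq_zero.1 hmul).resolve_left (card_ne_zero_of_mem (mem_sdiff.2 ⟨hiT, hi⟩))

theorem apply_eq_zero_of_mem_subalgebraOn [DecidableEq ι] (hf : IsInvariantOn ρ T f)
    (hx : IsArnoldFamily x) (hρ : ∀ σ i j, ρ σ (x i j) = x (σ i) (σ j)) (hr : r ∉ T)
    (hstar : ∀ S ⊆ T, f (starProd x r S) = 0) {y : A} (hy : y ∈ subalgebraOn k x (insert r T)) :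
    f y = 0 := by
  induction T using Finset.strongInduction generalizing r f y with
  | H T ih =>
    have vanish_on {g : A →ₗ[k] V} (i : ι) (hi : i ∈ T) (hg : IsInvariantOn ρ (T.erase i) g)
        (hstar : ∀ S ⊆ T.erase i, g (starProd x i S) = 0) (b : A) (hb : b ∈ subalgebraOn k x T) :
        g b = 0 :=
      ih _ (erase_ssubset hi) hg (notMem_erase i T) hstar (by rwa [insert_erase hi])
    have hf_one : f 1 = 0 := by simpa [starProd] using hstar ∅ (empty_subset T)
    have hf_base : ∀ b ∈ subalgebraOn k x T, f b = 0 := fun b hb => by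
      rcases T.eq_empty_or_nonempty with rfl | ⟨i, hi⟩
      · obtain ⟨c, rfl⟩ : ∃ c, algebraMap k A c = b := by
          simpa [subalgebraOn, Algebra.mem_bot] using hb
        rw [Algebra.algebraMap_eq_smul_one, map_smul, hf_one, smul_zero]
      · refine vanish_on i hi (hf.mono (erase_subset i T)) (fun S hS => ?_) b hb
        rcases S.eq_empty_or_nonempty with rfl | hne
        · simpa [starProd] using hf_one
        · exact hf.apply_starProd_eq_zero hx hρ hne (fun h => notMem_erase i T (hS h))
            (insert_subset hi (hS.trans (erase_subset i T)))
    have hf_mul : ∀ i ∈ T, ∀ b ∈ subalgebraOn k x T, f (b * x i r) = 0 := fun i hi b hb => by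
      have hfix : ∀ σ : Perm ι, (∀ j ∉ T.erase i, σ j = j) → ρ σ (x i r) = x i r := fun σ hσ => by
        rw [hρ, hσ i (notMem_erase i T), hσ r fun h => hr (mem_of_mem_erase h)]
      refine vanish_on i hi ((hf.mono (erase_subset i T)).comp_mulRight hfix) (fun S hS => ?_) b hb
      have hiS : i ∉ S := fun h => notMem_erase i T (hS h)
      have hiST : insert i S ⊆ T := insert_subset hi (hS.trans (erase_subset i T))
      have := hf.apply_mul_starProd_erase_eq_zero hx hρ hiST hr (hstar _ hiST) (mem_insert_self i S)
      rwa [erase_insert hiS, mul_comm] at this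
    refine eq_zero_of_mem_span_subalgebra ?_ (hx.mem_span_of_mem_subalgebraOn_insert hy)
    rintro b hb _ (rfl | ⟨i, hi, rfl⟩)
    · simpa using hf_base b hb
    · exact hf_mul i hi b hb

end IsInvariantOn

end Invariance

end Arnold

namespace VG

open MvPolynomial

/-- The class of `x_{ij}` in `VG_n`, with the convention `x_{ii} = 0`. -/
def x (n : ℕ) (i j : Fin (n + 1)) : VG n :=
  if h : i ≠ j then Ideal.Quotient.mk (VGrel n) (X ⟨(i, j), h⟩) else 0

variable {n : ℕ}

theorem x_self (i : Fin (n + 1)) : x n i i = 0 := dif_neg (not_not.2 rfl)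

theorem x_of_ne {i j : Fin (n + 1)} (h : i ≠ j) :
    x n i j = Ideal.Quotient.mk (VGrel n) (X ⟨(i, j), h⟩) := dif_pos h

theorem x_mul_self (i j : Fin (n + 1)) : x n i j * x n i j = 0 := by
  rcases eq_or_ne i j with rfl | h
  · rw [x_self, zero_mul]
  · rw [x_of_ne h, ← map_mul, Ideal.Quotient.eq_zero_iff_mem, ← pow_two]
    exact Ideal.subset_span (Or.inl (Or.inl ⟨_, rfl⟩))

theorem x_antisymm (i j : Fin (n + 1)) : x n j i = -x n i j := by
  rcases eq_or_ne i j with rfl | h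
  · rw [x_self, neg_zero]
  · rw [eq_neg_iff_add_eq_zero, add_comm, x_of_ne h, x_of_ne h.symm, ← map_add,
      Ideal.Quotient.eq_zero_iff_mem]
    exact Ideal.subset_span (Or.inl (Or.inr ⟨i, j, h, rfl⟩))

theorem isArnoldFamily_x : IsArnoldFamily (x n) where
  self := x_self
  antisymm := x_antisymm
  triangle i j k := by
    rcases eq_or_ne i j with rfl | hij
    · rw [x_self, x_antisymm i k]
      linear_combination -x_mul_self i k
    rcases eq_or_ne j k with rfl | hjk
    · rw [x_self, x_antisymm i j]
      linear_combination -x_mul_self i j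
    rcases eq_or_ne k i with rfl | hki
    · rw [x_self, x_antisymm k j]
      linear_combination -x_mul_self k j
    rw [x_of_ne hij, x_of_ne hjk, x_of_ne hki, ← map_mul, ← map_mul, ← map_mul, ← map_add,
      ← map_add, Ideal.Quotient.eq_zero_iff_mem]
    exact Ideal.subset_span (Or.inr ⟨i, j, k, hij, hjk, hki, rfl⟩)

theorem subalgebraOn_x_univ : subalgebraOn ℚ (x n) univ = ⊤ := by
  refine top_le_iff.1 fun y _ => ?_
  obtain ⟨p, rfl⟩ := Ideal.Quotient.mk_surjective y
  induction p using MvPolynomial.induction_on with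
  | C a => exact Subalgebra.algebraMap_mem _ a
  | add p q hp hq =>
    rw [map_add]
    exact add_mem (hp trivial) (hq trivial)
  | mul_X p v hp =>
    rw [map_mul, ← x_of_ne v.2]
    exact mul_mem (hp trivial) (Algebra.subset_adjoin ⟨_, by simp, _, by simp, rfl⟩)

theorem algHom_ext {A : Type*} [Semiring A] [Algebra ℚ A] {f g : VG n →ₐ[ℚ] A}
    (h : ∀ i j, f (x n i j) = g (x n i j)) : f = g :=
  Ideal.Quotient.algHom_ext _ <| MvPolynomial.algHom_ext fun v => by
    simpa [x_of_ne v.2] using h v.1.1 v.1.2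

section Lift

variable {A : Type*} [CommRing A] [Algebra ℚ A] {y : Fin (n + 1) → Fin (n + 1) → A}

/-- The universal property of `VG_n`: the algebra homomorphism sending `x_{ij}` to `y_{ij}`. -/
def lift (hy : IsArnoldFamily y) : VG n →ₐ[ℚ] A :=
  Ideal.Quotient.liftₐ (VGrel n) (aeval fun v => y v.1.1 v.1.2) <| by
    suffices VGrel n ≤ RingHom.ker (aeval fun v : VGidx n => y v.1.1 v.1.2) from fun _ h => this h
    rw [VGrel, Ideal.span_le]
    rintro _ ((⟨v, rfl⟩ | ⟨i, j, hij, rfl⟩) | ⟨i, j, k, hij, hjk, hki, rfl⟩)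
    · simp [pow_two, hy.mul_self]
    · simp [hy.antisymm i j]
    · simp [hy.triangle i j k]

theorem lift_x (hy : IsArnoldFamily y) (i j : Fin (n + 1)) : lift hy (x n i j) = y i j := by
  rcases eq_or_ne i j with rfl | h
  · rw [x_self, map_zero, hy.self]
  · rw [x_of_ne h]
    exact aeval_X _ _

end Lift

theorem VGperm_x (σ : Perm (Fin (n + 1))) (i j : Fin (n + 1)) :
    VGperm n σ (x n i j) = x n (σ i) (σ j) := by
  rcases eq_or_ne i j with rfl | h
  · rw [x_self, x_self, map_zero]
  · rw [x_of_ne h, x_of_ne (σ.injective.ne h)]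
    exact congrArg (Ideal.Quotient.mk (VGrel n)) (rename_X _ _)

theorem VGperm_VGperm (σ τ : Perm (Fin (n + 1))) (y : VG n) :
    VGperm n σ (VGperm n τ y) = VGperm n (σ * τ) y :=
  DFunLike.congr_fun (algHom_ext (f := (VGperm n σ).comp (VGperm n τ))
    fun i j => by simp [VGperm_x]) y

theorem zVG_eq_sum_castSucc : zVG n = ∑ i : Fin n, x n i.castSucc (Fin.last n) := by
  simp only [zVG, map_sum, x_of_ne (Fin.castSucc_lt_last _).ne]

theorem zVG_eq_sum_univ : zVG n = ∑ i, x n i (Fin.last n) := by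
  rw [Fin.sum_univ_castSucc, x_self, add_zero, zVG_eq_sum_castSucc]

theorem zVG_eq_sum_compl : zVG n = ∑ i ∈ {Fin.last n}ᶜ, x n i (Fin.last n) := by
  rw [zVG_eq_sum_univ, Fintype.sum_eq_add_sum_compl (Fin.last n), x_self, zero_add]

theorem zVG_mem_VGinv : zVG n ∈ VGinv n := fun σ hσ => by
  rw [zVG_eq_sum_univ, map_sum]
  simp only [VGperm_x, hσ]
  exact sum_comp σ fun i => x n i (Fin.last n)

theorem zVG_pow_succ_eq_zero : zVG n ^ (n + 1) = 0 := by
  rw [zVG_eq_sum_castSucc]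
  simpa using sum_pow_card_succ_eq_zero (fun i : Fin n => x_mul_self i.castSucc (Fin.last n)) univ

theorem zVG_pow_ne_zero : zVG n ^ n ≠ 0 := by
  obtain ⟨A, _, _, e, he, hsum⟩ := exists_sq_eq_zero_sum_pow_ne_zero ℚ n
  have he_snoc : ∀ i, Fin.snoc (α := fun _ => A) e 0 i * Fin.snoc (α := fun _ => A) e 0 i = 0 :=
    Fin.lastCases (by simp) fun i => by simpa using he i
  let φ : VG n →ₐ[ℚ] A := lift (IsArnoldFamily.of_mul_self_eq_zero he_snoc)
  have hφ : φ (zVG n) = ∑ i, e i := by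
    simp [φ, zVG_eq_sum_castSucc, lift_x, Fin.castSucc_lt_last]
  intro h
  exact hsum (by rw [← hφ, ← map_pow, h, map_zero])

/-- The Reynolds operator of `S_n` acting on `VG_n`, without the factor `1 / n!`. -/
def reynolds (n : ℕ) : VG n →ₗ[ℚ] VG n :=
  ∑ σ : Perm (Fin (n + 1)) with σ (Fin.last n) = Fin.last n, (VGperm n σ).toLinearMap

theorem reynolds_VGperm {τ : Perm (Fin (n + 1))} (hτ : τ (Fin.last n) = Fin.last n) (y : VG n) :
    reynolds n (VGperm n τ y) = reynolds n y := by
  simp only [reynolds, LinearMap.sum_apply, AlgHom.toLinearMap_apply, VGperm_VGperm]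
  exact sum_equiv (Equiv.mulRight τ) (by simp [hτ]) fun _ _ => rfl

theorem reynolds_of_mem_VGinv {y : VG n} (hy : y ∈ VGinv n) :
    reynolds n y = #{σ : Perm (Fin (n + 1)) | σ (Fin.last n) = Fin.last n} • y := by
  simp only [reynolds, LinearMap.sum_apply, AlgHom.toLinearMap_apply]
  exact sum_eq_card_nsmul fun σ hσ => hy σ (mem_filter.1 hσ).2

theorem mem_of_reynolds_mem {W : Submodule ℚ (VG n)} {y : VG n} (hy : y ∈ VGinv n)
    (h : reynolds n y ∈ W) : y ∈ W := by
  rw [reynolds_of_mem_VGinv hy, ← Nat.cast_smul_eq_nsmul ℚ] at h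
  exact (W.smul_mem_iff (Nat.cast_ne_zero.2 (card_ne_zero_of_mem (a := 1) (by simp)))).1 h

theorem eq_zero_of_forall_zVG_pow_eq_zero {V : Type*} [AddCommGroup V] [Module ℚ V]
    {f : VG n →ₗ[ℚ] V} (hf : ∀ σ, σ (Fin.last n) = Fin.last n → ∀ y, f (VGperm n σ y) = f y)
    (hpow : ∀ d : ℕ, f (zVG n ^ d) = 0) : f = 0 := by
  have : IsAddTorsionFree V := .of_module_rat V
  have hinv : IsInvariantOn (VGperm n) {Fin.last n}ᶜ f := fun σ hσ => hf σ (hσ _ (by simp))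
  have hstar : ∀ S ⊆ {Fin.last n}ᶜ, f (starProd (x n) (Fin.last n) S) = 0 := fun S hS => by
    simpa using hinv.apply_pow_mul_starProd_eq_zero isArnoldFamily_x VGperm_x (by simp)
      (by simpa only [zVG_eq_sum_compl] using hpow) hS 0
  refine LinearMap.ext fun y => ?_
  refine hinv.apply_eq_zero_of_mem_subalgebraOn isArnoldFamily_x VGperm_x (by simp) hstar ?_
  rw [insert_compl_self, subalgebraOn_x_univ]
  exact Algebra.mem_top

theorem VGinv_le_span_zVG_pow :
    Subalgebra.toSubmodule (VGinv n) ≤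
      Submodule.span ℚ (Set.range fun d : Fin (n + 1) => zVG n ^ (d : ℕ)) := by
  set W := Submodule.span ℚ (Set.range fun d : Fin (n + 1) => zVG n ^ (d : ℕ))
  have hpow : ∀ d : ℕ, zVG n ^ d ∈ W := fun d => by
    rcases lt_or_ge d (n + 1) with hd | hd
    · exact Submodule.subset_span ⟨⟨d, hd⟩, rfl⟩
    · rw [pow_eq_zero_of_le hd zVG_pow_succ_eq_zero]
      exact W.zero_mem
  have hzero : W.mkQ ∘ₗ reynolds n = 0 := by
    refine eq_zero_of_forall_zVG_pow_eq_zero (fun σ hσ y => ?_) fun d => ?_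
    · simp only [LinearMap.comp_apply, reynolds_VGperm hσ]
    · rw [LinearMap.comp_apply, reynolds_of_mem_VGinv (pow_mem zVG_mem_VGinv d), map_nsmul,
        Submodule.mkQ_apply, (Submodule.Quotient.mk_eq_zero W).2 (hpow d), smul_zero]
  intro y hy
  refine mem_of_reynolds_mem hy ?_
  simpa using LinearMap.congr_fun hzero y

end VG

/-- For every integer `n ≥ 2`, the powers `z^d` for `0 ≤ d ≤ n` lie in the
invariant subalgebra `VG_n^{S_n}`, and `(1, z, z², …, zⁿ)` is a basis of `VG_n^{S_n}` as a
`ℚ`-vector space: the family is linearly independent and its span is exactly `VG_n^{S_n}`. -/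
theorem zVG_powers_basis_of_invariants (n : ℕ) (hn : 2 ≤ n) :
    (∀ d : ℕ, d ≤ n → zVG n ^ d ∈ VGinv n) ∧
    LinearIndependent ℚ (fun d : Fin (n+1) => zVG n ^ (d : ℕ)) ∧
    Submodule.span ℚ (Set.range (fun d : Fin (n+1) => zVG n ^ (d : ℕ)))
      = Subalgebra.toSubmodule (VGinv n) := by
  have hpow : ∀ d : ℕ, zVG n ^ d ∈ VGinv n := pow_mem VG.zVG_mem_VGinv
  refine ⟨fun d _ => hpow d, ?_, le_antisymm ?_ VG.VGinv_le_span_zVG_pow⟩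
  · exact linearIndependent_pow_of_pow_succ_eq_zero VG.zVG_pow_succ_eq_zero VG.zVG_pow_ne_zero
  · rw [Submodule.span_le]
    rintro _ ⟨d, rfl⟩
    exact hpow d

end
end

section
/- For every integer n ≥ 2, the ℚ-vector space VG_n^{S_{n+1}} of S_{n+1}-invariant elements of VG_n has dimension 1. -/
noncomputable section

set_option synthInstance.maxHeartbeats 1000000

/-!
The invariants lie in `ℚ` because every symmetric-group-invariant linear map `φ` on `VG n` with
`φ 1 = 0` is zero; this is applied to symmetrization followed by the quotient by the scalars.

Straightening with the Arnold relation reduces the vanishing of `φ` to elements `g * P`, where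
`P = x_{v₀v₁} x_{v₁v₂} ⋯ x_{v_{m-1}v_m}` is the monomial of a path with `m ≥ 1` edges and
distinct vertices, and `g` involves none of the vertices `v_i`. Inserting `v₀` at each of the
`m + 1` possible places of the path `v₁, …, v_m` gives monomials that are carried into one another
by permutations fixing `g`, so `φ` takes the same value on all their products with `g`. The sum of
the monomials is zero by the Arnold relation, whence `(m + 1) φ(g * P) = 0`.
-/

section ArnoldFamily

variable {K V A W : Type*}

/-- Elements `x i j` of a commutative ring, indexed by ordered pairs of vertices, that vanish on
the diagonal, are antisymmetric and satisfy the three-term Arnold relation. The indices are not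
required to be distinct, so that `x i j * x i j = 0` is the case `k = i` of `arnold`. -/
structure IsArnoldFamily_s6 [CommRing A] (x : V → V → A) : Prop where
  self (i : V) : x i i = 0
  swap (i j : V) : x j i = -x i j
  arnold (i j k : V) : x i j * x j k + x j k * x k i + x k i * x i j = 0

/-- The monomial `x (u 0) (u 1) * x (u 1) (u 2) * ⋯` attached to the path `u`; a path with a single
vertex has monomial `1`. -/
def pathProd [CommRing A] (x : V → V → A) {m : ℕ} (u : Fin (m + 1) → V) : A :=
  ∏ i : Fin m, x (u i.castSucc) (u i.succ)

/-- The subalgebra generated by the `x i j` with both indices in `S`. -/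
def adjoinOn (K : Type*) [CommRing K] [CommRing A] [Algebra K A] (x : V → V → A) (S : Set V) :
    Subalgebra K A :=
  Algebra.adjoin K (Set.image2 x S S)

lemma adjoinOn_empty [CommRing K] [CommRing A] [Algebra K A] (x : V → V → A) :
    adjoinOn K x ∅ = ⊥ := by
  rw [adjoinOn, Set.image2_empty_left, Algebra.adjoin_empty]

lemma pathProd_fin_one [CommRing A] (x : V → V → A) (u : Fin 1 → V) : pathProd x u = 1 :=
  Fin.prod_univ_zero _

lemma pathProd_cons [CommRing A] (x : V → V → A) {m : ℕ} (a : V) (u : Fin (m + 1) → V) :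
    pathProd x (Fin.cons a u : Fin (m + 2) → V) = x a (u 0) * pathProd x u := by
  simp only [pathProd, Fin.prod_univ_succ, Fin.castSucc_zero, Fin.castSucc_succ, Fin.cons_zero,
    Fin.cons_succ]

section LinearMap

variable [CommRing K] [CommRing A] [Algebra K A] [AddCommGroup W] [Module K W] {φ : A →ₗ[K] W}

lemma map_eq_zero_of_mem_bot (hφ₁ : φ 1 = 0) {f : A} (hf : f ∈ (⊥ : Subalgebra K A)) :
    φ f = 0 := by
  obtain ⟨r, rfl⟩ := Algebra.mem_bot.mp hf
  rw [Algebra.algebraMap_eq_smul_one, map_smul, hφ₁, smul_zero]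

lemma map_mul_pathProd_comp_perm {x : V → V → A} {ρ : Equiv.Perm V → A →ₐ[K] A}
    (hρ : ∀ σ i j, ρ σ (x i j) = x (σ i) (σ j))
    (hφ : ∀ σ f, φ (ρ σ f) = φ f) {S : Set V} {m : ℕ} {u : Fin (m + 1) → V}
    (hu : Function.Injective u) (huS : ∀ i, u i ∉ S) {g : A} (hg : g ∈ adjoinOn K x S)
    (τ : Equiv.Perm (Fin (m + 1))) :
    φ (g * pathProd x (u ∘ τ)) = φ (g * pathProd x u) := by
  let σ : Equiv.Perm V := τ.viaEmbedding ⟨u, hu⟩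
  have map_vertex (i) : σ (u i) = u (τ i) := τ.viaEmbedding_apply ⟨u, hu⟩ i
  have fixes {i : V} (hi : i ∈ S) : σ i = i := by
    refine τ.viaEmbedding_apply_of_notMem ⟨u, hu⟩ i ?_
    rintro ⟨j, rfl⟩
    exact huS j hi
  have map_coeff : ρ σ g = g := by
    refine AlgHom.adjoin_le_equalizer (ρ σ) (AlgHom.id K A) ?_ hg
    rintro _ ⟨i, hi, j, hj, rfl⟩
    simp [hρ, fixes hi, fixes hj]
  have map_path : ρ σ (pathProd x u) = pathProd x (u ∘ τ) := by
    simp [pathProd, map_prod, hρ, map_vertex]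
  rw [← hφ σ (g * pathProd x u), map_mul (ρ σ), map_coeff, map_path]

end LinearMap

namespace IsArnoldFamily_s6

section Path

variable [CommRing A] {x : V → V → A}

lemma mul_eq (hx : IsArnoldFamily_s6 x) (i j a : V) :
    x i a * x j a = x i j * (x j a - x i a) := by
  linear_combination x i j * hx.swap i a + x j a * hx.swap i a - hx.arnold i j a

/-- Inserting `w` into the edge from `a` to `b` multiplies the monomial by `x a w - x b w`, so
the sum telescopes. -/
lemma sum_pathProd_insertNth_succ (hx : IsArnoldFamily_s6 x) (w : V) {m : ℕ} (u : Fin (m + 1) → V) :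
    ∑ p : Fin (m + 1), pathProd x (p.succ.insertNth w u : Fin (m + 2) → V) =
      x (u 0) w * pathProd x u := by
  induction m with
  | zero =>
    obtain ⟨a, v, rfl⟩ : ∃ a v, u = Fin.cons a v := ⟨_, _, (Fin.cons_self_tail u).symm⟩
    simp only [Fin.insertNth_succ_cons]
    simp [pathProd_cons, pathProd_fin_one]
  | succ m ih =>
    obtain ⟨a, v, rfl⟩ : ∃ a v, u = Fin.cons a v := ⟨_, _, (Fin.cons_self_tail u).symm⟩
    have insert_after (p : Fin (m + 1)) :
        pathProd x (Fin.cons a (p.succ.insertNth w v : Fin (m + 2) → V) : Fin (m + 3) → V) =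
          x a (v 0) * pathProd x (p.succ.insertNth w v : Fin (m + 2) → V) := by
      rw [pathProd_cons, ← Fin.succ_succAbove_zero, Fin.insertNth_apply_succAbove]
    simp only [Fin.insertNth_succ_cons]
    rw [Fin.sum_univ_succ]
    simp only [insert_after, ← Finset.mul_sum, ih, Fin.insertNth_zero', pathProd_cons,
      Fin.cons_zero]
    linear_combination pathProd x v * (x a w * hx.swap (v 0) w - hx.mul_eq a (v 0) w)

lemma sum_pathProd_insertNth (hx : IsArnoldFamily_s6 x) (w : V) {m : ℕ} (u : Fin (m + 1) → V) :
    ∑ p : Fin (m + 2), pathProd x (p.insertNth w u : Fin (m + 2) → V) = 0 := by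
  rw [Fin.sum_univ_succ, hx.sum_pathProd_insertNth_succ, Fin.insertNth_zero', pathProd_cons,
    hx.swap (u 0) w]
  ring

end Path

section Algebra

variable [CommRing K] [CommRing A] [Algebra K A] [AddCommGroup W] [Module K W] {x : V → V → A}

lemma mem_span_of_mem_adjoinOn_insert (hx : IsArnoldFamily_s6 x) {S : Set V} {a : V} {f : A}
    (hf : f ∈ adjoinOn K x (insert a S)) :
    f ∈ Submodule.span (adjoinOn K x S) (insert 1 ((x · a) '' S)) := by
  set M := Submodule.span (adjoinOn K x S) (insert 1 ((x · a) '' S))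
  have one_mem : 1 ∈ M := Submodule.subset_span (Set.mem_insert _ _)
  have edge_mem {i : V} (hi : i ∈ S) : x i a ∈ M :=
    Submodule.subset_span (Set.mem_insert_of_mem _ ⟨i, hi, rfl⟩)
  have inner_mem {i j : V} (hi : i ∈ S) (hj : j ∈ S) : x i j ∈ adjoinOn K x S :=
    Algebra.subset_adjoin (Set.mem_image2_of_mem hi hj)
  have smul_mem {g y : A} (hg : g ∈ adjoinOn K x S) (hy : y ∈ M) : g * y ∈ M :=
    M.smul_mem ⟨g, hg⟩ hy
  have mul_le : M * M ≤ M := by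
    rw [Submodule.span_mul_span, Submodule.span_le]
    rintro _ ⟨_, rfl | ⟨i, hi, rfl⟩, _, rfl | ⟨j, hj, rfl⟩, rfl⟩
    · simpa using one_mem
    · simpa using edge_mem hj
    · simpa using edge_mem hi
    · simpa [hx.mul_eq i j a] using
        smul_mem (inner_mem hi hj) (M.sub_mem (edge_mem hj) (edge_mem hi))
  induction hf using Algebra.adjoin_induction with
  | mem y hy =>
    obtain ⟨i, rfl | hi, j, rfl | hj, rfl⟩ := hy
    · rw [hx.self]
      exact M.zero_mem
    · rw [hx.swap]
      exact M.neg_mem (edge_mem hj)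
    · exact edge_mem hi
    · simpa using smul_mem (inner_mem hi hj) one_mem
  | algebraMap r => simpa using smul_mem ((adjoinOn K x S).algebraMap_mem r) one_mem
  | add y z _ _ hy hz => exact M.add_mem hy hz
  | mul y z _ _ hy hz => exact mul_le (Submodule.mul_mem_mul hy hz)

lemma map_mul_eq_zero_of_mem_adjoinOn_insert (hx : IsArnoldFamily_s6 x) {φ : A →ₗ[K] W} {S : Set V}
    {a : V} {f y : A} (hf : f ∈ adjoinOn K x (insert a S))
    (inner : ∀ g ∈ adjoinOn K x S, φ (g * y) = 0)
    (edge : ∀ g ∈ adjoinOn K x S, ∀ i ∈ S, φ (g * x i a * y) = 0) :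
    φ (f * y) = 0 := by
  replace hf := hx.mem_span_of_mem_adjoinOn_insert hf
  suffices ∀ g ∈ adjoinOn K x S, φ (g * f * y) = 0 by simpa using this 1 (one_mem _)
  induction hf using Submodule.span_induction with
  | mem z hz =>
    obtain rfl | ⟨i, hi, rfl⟩ := hz
    · simpa using inner
    · exact fun g hg ↦ edge g hg i hi
  | zero => simp
  | add z z' _ _ hz hz' =>
    intro g hg
    rw [mul_add, add_mul, map_add, hz g hg, hz' g hg, add_zero]
  | smul r z _ hz =>
    intro g hg
    simpa [Subalgebra.smul_def, mul_assoc] using hz (g * (r : A)) (mul_mem hg r.2)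

end Algebra

section Invariant

variable [Field K] [CommRing A] [Algebra K A] [AddCommGroup W] [Module K W]
  [CharZero K] {x : V → V → A} {ρ : Equiv.Perm V → A →ₐ[K] A} {φ : A →ₗ[K] W}

lemma map_mul_pathProd_eq_zero (hx : IsArnoldFamily_s6 x)
    (hρ : ∀ σ i j, ρ σ (x i j) = x (σ i) (σ j)) (hφ : ∀ σ f, φ (ρ σ f) = φ f)
    {S : Set V} {m : ℕ} {u : Fin (m + 2) → V} (hu : Function.Injective u) (huS : ∀ i, u i ∉ S)
    {g : A} (hg : g ∈ adjoinOn K x S) :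
    φ (g * pathProd x u) = 0 := by
  have map_insertion (p : Fin (m + 2)) :
      φ (g * pathProd x (p.insertNth (u 0) (Fin.tail u) : Fin (m + 2) → V)) =
        φ (g * pathProd x u) := by
    rw [← Fin.cons_comp_cycleRange, Fin.cons_self_tail]
    exact map_mul_pathProd_comp_perm hρ hφ hu huS hg p.cycleRange
  have card_smul_eq_zero : ((m + 2 : ℕ) : K) • φ (g * pathProd x u) = 0 :=
    calc ((m + 2 : ℕ) : K) • φ (g * pathProd x u)
      _ = ∑ p : Fin (m + 2),
            φ (g * pathProd x (p.insertNth (u 0) (Fin.tail u) : Fin (m + 2) → V)) := by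
        simp [map_insertion, ← Nat.cast_smul_eq_nsmul K]
      _ = 0 := by
        rw [← map_sum, ← Finset.mul_sum, hx.sum_pathProd_insertNth, mul_zero, map_zero]
  exact (smul_eq_zero.mp card_smul_eq_zero).resolve_left (Nat.cast_ne_zero.mpr (by omega))

/-- Expanding the coefficient along the edges that enter `u 0` either removes `u 0` from the
coefficient or prolongs the path backwards by a vertex of `S`, which shrinks `S`. -/
lemma map_mul_pathProd_eq_zero_of_mem_insert (hx : IsArnoldFamily_s6 x)
    (hρ : ∀ σ i j, ρ σ (x i j) = x (σ i) (σ j)) (hφ : ∀ σ f, φ (ρ σ f) = φ f) (hφ₁ : φ 1 = 0)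
    (S : Finset V) {m : ℕ} {u : Fin (m + 1) → V} (hu : Function.Injective u)
    (huS : ∀ i, u i ∉ S) {f : A} (hf : f ∈ adjoinOn K x (insert (u 0) S)) :
    φ (f * pathProd x u) = 0 := by
  classical
  induction S using Finset.strongInduction generalizing m f with
  | H S ih =>
  have insert_erase {i : V} (hi : i ∈ S) : insert i (S.erase i : Set V) = S := by
    rw [← Finset.coe_insert, Finset.insert_erase hi]
  have inner {g : A} (hg : g ∈ adjoinOn K x (S : Set V)) : φ (g * pathProd x u) = 0 := by
    cases m with
    | succ m => exact hx.map_mul_pathProd_eq_zero hρ hφ hu huS hg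
    | zero =>
      rw [pathProd_fin_one]
      obtain rfl | ⟨i, hi⟩ := S.eq_empty_or_nonempty
      · rw [Finset.coe_empty, adjoinOn_empty] at hg
        rw [mul_one, map_eq_zero_of_mem_bot hφ₁ hg]
      · rw [← pathProd_fin_one x fun _ ↦ i]
        exact ih _ (Finset.erase_ssubset hi) (Function.injective_of_subsingleton (α := Fin 1) _)
          (fun _ ↦ Finset.notMem_erase i S) (by rwa [insert_erase hi])
  have edge {g : A} (hg : g ∈ adjoinOn K x (S : Set V)) {i : V} (hi : i ∈ S) :
      φ (g * x i (u 0) * pathProd x u) = 0 := by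
    have hiu : i ∉ Set.range u := by
      rintro ⟨j, rfl⟩
      exact huS j hi
    rw [mul_assoc, ← pathProd_cons]
    refine ih _ (Finset.erase_ssubset hi) (Fin.cons_injective_iff.mpr ⟨hiu, hu⟩) ?_ ?_
    · exact Fin.cases (Finset.notMem_erase i S) fun j hj ↦ huS j (Finset.mem_of_mem_erase hj)
    · rwa [Fin.cons_zero, insert_erase hi]
  exact hx.map_mul_eq_zero_of_mem_adjoinOn_insert hf (fun _ ↦ inner) fun _ hg _ ↦ edge hg

lemma map_eq_zero_of_map_one_eq_zero [Finite V] (hx : IsArnoldFamily_s6 x)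
    (hρ : ∀ σ i j, ρ σ (x i j) = x (σ i) (σ j)) (hgen : adjoinOn K x Set.univ = ⊤)
    (hφ : ∀ σ f, φ (ρ σ f) = φ f) (hφ₁ : φ 1 = 0) (f : A) : φ f = 0 := by
  classical
  have := Fintype.ofFinite V
  have hf : f ∈ adjoinOn K x Set.univ := hgen ▸ Algebra.mem_top
  obtain _ | ⟨⟨i⟩⟩ := isEmpty_or_nonempty V
  · rw [Set.univ_eq_empty_iff.mpr ‹_›, adjoinOn_empty] at hf
    exact map_eq_zero_of_mem_bot hφ₁ hf
  · rw [← mul_one f, ← pathProd_fin_one x fun _ ↦ i]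
    refine hx.map_mul_pathProd_eq_zero_of_mem_insert hρ hφ hφ₁ (Finset.univ.erase i)
      (Function.injective_of_subsingleton (α := Fin 1) _) (by simp) ?_
    rwa [← Finset.coe_insert, Finset.insert_erase (Finset.mem_univ i), Finset.coe_univ]

lemma mem_bot_of_forall_map_eq [Finite V] (hx : IsArnoldFamily_s6 x)
    (hρ : ∀ σ i j, ρ σ (x i j) = x (σ i) (σ j)) (hgen : adjoinOn K x Set.univ = ⊤)
    {f : A} (hf : ∀ σ, ρ σ f = f) : f ∈ (⊥ : Subalgebra K A) := by
  classical
  have := Fintype.ofFinite V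
  have ρ_mul (σ τ : Equiv.Perm V) : (ρ σ).comp (ρ τ) = ρ (σ * τ) := by
    refine AlgHom.ext_of_adjoin_eq_top hgen ?_
    rintro _ ⟨i, -, j, -, rfl⟩
    simp [hρ]
  let sym : A →ₗ[K] A := ∑ σ, (ρ σ).toLinearMap
  have sym_apply (g : A) : sym g = ∑ σ, ρ σ g := by simp [sym]
  have sym_map (τ : Equiv.Perm V) (g : A) : sym (ρ τ g) = sym g := by
    simp only [sym_apply, ← AlgHom.comp_apply, ρ_mul]
    exact Fintype.sum_equiv (Equiv.mulRight τ) _ _ fun _ ↦ rfl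
  have sym_one_mem : sym 1 ∈ (⊥ : Subalgebra K A) := by
    simp only [sym_apply, map_one]
    exact sum_mem fun _ _ ↦ one_mem _
  let scalars := Subalgebra.toSubmodule (⊥ : Subalgebra K A)
  have sym_mem : sym f ∈ scalars :=
    (Submodule.Quotient.mk_eq_zero scalars).mp <|
      hx.map_eq_zero_of_map_one_eq_zero (φ := scalars.mkQ ∘ₗ sym) hρ hgen
        (fun τ g ↦ congrArg scalars.mkQ (sym_map τ g))
        ((Submodule.Quotient.mk_eq_zero scalars).mpr sym_one_mem) f
  have sym_eq : sym f = (Fintype.card (Equiv.Perm V) : K) • f := by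
    simp [sym_apply, hf, Nat.cast_smul_eq_nsmul]
  rw [sym_eq] at sym_mem
  exact (scalars.smul_mem_iff (Nat.cast_ne_zero.mpr Fintype.card_ne_zero)).mp sym_mem

end Invariant

end IsArnoldFamily_s6

end ArnoldFamily

section VarchenkoGelfand

/-- The class of `x_{ij}` in `VG n`, extended by `0` to `i = j`. -/
def VGgen (n : ℕ) (i j : Fin (n + 1)) : VG n :=
  if h : i ≠ j then Ideal.Quotient.mk (VGrel n) (MvPolynomial.X ⟨(i, j), h⟩) else 0

variable (n : ℕ)

lemma VGgen_self (i : Fin (n + 1)) : VGgen n i i = 0 := by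
  simp [VGgen]

variable {n} in
lemma VGgen_of_ne {i j : Fin (n + 1)} (h : i ≠ j) :
    VGgen n i j = Ideal.Quotient.mk (VGrel n) (MvPolynomial.X ⟨(i, j), h⟩) :=
  dif_pos h

lemma VGgen_mul_self (i j : Fin (n + 1)) : VGgen n i j * VGgen n i j = 0 := by
  obtain rfl | h := eq_or_ne i j
  · rw [VGgen_self, mul_zero]
  · rw [VGgen_of_ne h, ← map_mul, ← pow_two, Ideal.Quotient.eq_zero_iff_mem]
    exact Ideal.subset_span (Or.inl (Or.inl ⟨_, rfl⟩))

lemma VGgen_swap (i j : Fin (n + 1)) : VGgen n j i = -VGgen n i j := by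
  obtain rfl | h := eq_or_ne i j
  · rw [VGgen_self, neg_zero]
  · rw [eq_neg_iff_add_eq_zero, VGgen_of_ne h, VGgen_of_ne h.symm, ← map_add,
      Ideal.Quotient.eq_zero_iff_mem]
    exact Ideal.subset_span (Or.inl (Or.inr ⟨j, i, h.symm, rfl⟩))

lemma VGgen_arnold (i j k : Fin (n + 1)) :
    VGgen n i j * VGgen n j k + VGgen n j k * VGgen n k i + VGgen n k i * VGgen n i j = 0 := by
  by_cases hij : i = j
  · subst hij
    linear_combination (VGgen n i k + VGgen n k i) * VGgen_self n i +
      VGgen n i k * VGgen_swap n i k - VGgen_mul_self n i k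
  by_cases hjk : j = k
  · subst hjk
    linear_combination (VGgen n i j + VGgen n j i) * VGgen_self n j +
      VGgen n i j * VGgen_swap n i j - VGgen_mul_self n i j
  by_cases hki : k = i
  · subst hki
    linear_combination (VGgen n k j + VGgen n j k) * VGgen_self n k +
      VGgen n k j * VGgen_swap n k j - VGgen_mul_self n k j
  rw [VGgen_of_ne hij, VGgen_of_ne hjk, VGgen_of_ne hki]
  simp only [← map_mul, ← map_add, Ideal.Quotient.eq_zero_iff_mem]
  exact Ideal.subset_span (Or.inr ⟨i, j, k, hij, hjk, hki, rfl⟩)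

lemma isArnoldFamily_VGgen : IsArnoldFamily_s6 (VGgen n) :=
  ⟨VGgen_self n, VGgen_swap n, VGgen_arnold n⟩

lemma VGperm_VGgen (σ : Equiv.Perm (Fin (n + 1))) (i j : Fin (n + 1)) :
    VGperm n σ (VGgen n i j) = VGgen n (σ i) (σ j) := by
  obtain rfl | h := eq_or_ne i j
  · simp only [VGgen_self, map_zero]
  · rw [VGgen_of_ne h, VGgen_of_ne (σ.injective.ne h)]
    exact congrArg (Ideal.Quotient.mk (VGrel n)) (MvPolynomial.rename_X _ _)

lemma adjoinOn_VGgen_univ : adjoinOn ℚ (VGgen n) Set.univ = ⊤ := by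
  refine top_unique ?_
  rw [← AlgHom.range_eq_top (Ideal.Quotient.mkₐ ℚ (VGrel n)) |>.mpr
    (Ideal.Quotient.mkₐ_surjective ℚ _), ← Algebra.map_top, ← MvPolynomial.adjoin_range_X,
    AlgHom.map_adjoin]
  refine Algebra.adjoin_mono ?_
  rintro _ ⟨_, ⟨v, rfl⟩, rfl⟩
  exact ⟨v.1.1, trivial, v.1.2, trivial, VGgen_of_ne v.2⟩

lemma VGrel_le_ker_constantCoeff : VGrel n ≤ RingHom.ker MvPolynomial.constantCoeff := by
  rw [VGrel, Ideal.span_le]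
  rintro q ((⟨v, rfl⟩ | ⟨i, j, hij, rfl⟩) | ⟨i, j, k, hij, hjk, hki, rfl⟩) <;>
    simp [RingHom.mem_ker]

instance nontrivial_VG : Nontrivial (VG n) :=
  Ideal.Quotient.nontrivial_iff.mpr fun h ↦
    RingHom.ker_ne_top MvPolynomial.constantCoeff (top_unique (h ▸ VGrel_le_ker_constantCoeff n))

lemma VGinvFull_eq_bot : VGinvFull n = ⊥ :=
  eq_bot_iff.mpr fun _ hf ↦
    (isArnoldFamily_VGgen n).mem_bot_of_forall_map_eq (VGperm_VGgen n) (adjoinOn_VGgen_univ n) hf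

end VarchenkoGelfand

/-- For every integer `n ≥ 2`, the `ℚ`-vector space `VG_n^{S_{n+1}}` has
dimension `1`. -/
theorem finrank_VGinvFull (n : ℕ) (hn : 2 ≤ n) : Module.finrank ℚ (VGinvFull n) = 1 := by
  rw [VGinvFull_eq_bot]
  exact Subalgebra.finrank_bot

end
end
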